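/- arXiv:math/0602176 — 3 statements merged into one kernel-verified Lean document; each statement's English description precedes it below -/
import Mathlib

section
/- Let g and g' be commuting automorphisms of T^{k+1} induced by commuting matrices A, A' ∈ GL(k+1,ℤ), and let f, f' be commuting continuous self-maps of T^{k+1} with f homotopic to g and f' homotopic to g'. Suppose h : T^{k+1} → T^{k+1} is continuous, homotopic to the identity, satisfies h ∘ f = g ∘ h, and is the unique such map (i.e., any continuous h' homotopic to the identity with h' ∘ f = g ∘ h' equals h). Then h ∘ f' = g' ∘ h. -/
open MeasureTheory Filter Function Set

noncomputable section

/-- The `d`-dimensional torus `ℝ^d/ℤ^d`, modeled as a product of unit circles. -/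
abbrev Torus (d : ℕ) : Type := Fin d → AddCircle (1 : ℝ)

/-- The self-map of the torus induced by an integer matrix `A` (for `A ∈ GL(d,ℤ)`
this is the induced toral automorphism). -/
def toralMap {d : ℕ} (A : Matrix (Fin d) (Fin d) ℤ) : Torus d → Torus d :=
  fun x i => ∑ j, A i j • x j

lemma toralMap_continuous {d : ℕ} (A : Matrix (Fin d) (Fin d) ℤ) :
    Continuous (toralMap A) :=
  continuous_pi fun i => continuous_finset_sum _ fun j _ =>
    (continuous_zsmul (A i j)).comp (continuous_apply j)

/-- A linear Cartan action of `ℤ^k` on `T^{k+1}`: a homomorphism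
`ρ : ℤ^k → GL(k+1,ℤ)` such that for every `m ≠ 0` the matrix `ρ m` has `k+1`
distinct real eigenvalues, none of absolute value `1`. -/
structure CartanAction (k : ℕ) where
  ρ : (Fin k → ℤ) → Matrix (Fin (k+1)) (Fin (k+1)) ℤ
  map_zero : ρ 0 = 1
  map_add : ∀ m n, ρ (m + n) = ρ m * ρ n
  isUnit : ∀ m, IsUnit (ρ m).det
  cartan : ∀ m, m ≠ 0 → ∃ e : Fin (k+1) → ℝ, Function.Injective e ∧
    (∀ i, |e i| ≠ 1) ∧
    Matrix.charpoly ((ρ m).map (Int.cast : ℤ → ℝ)) = ∏ i, (Polynomial.X - Polynomial.C (e i))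

/-- The canonical projection `ℝ^d → T^d`. -/
def Torus.proj (d : ℕ) : (Fin d → ℝ) → Torus d := fun x i => (x i : AddCircle (1 : ℝ))

lemma toralMap_mul_apply {d : ℕ} (A B : Matrix (Fin d) (Fin d) ℤ) (x : Torus d) :
    toralMap (A * B) x = toralMap A (toralMap B x) := by
  funext i
  simp only [toralMap, Matrix.mul_apply, Finset.sum_smul, Finset.smul_sum, mul_smul]
  exact Finset.sum_comm

lemma toralMap_one_apply {d : ℕ} (x : Torus d) :
    toralMap (1 : Matrix (Fin d) (Fin d) ℤ) x = x := by
  funext i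
  simp only [toralMap, Matrix.one_apply]
  rw [Finset.sum_eq_single i]
  · simp
  · intro j _ hj
    simp [Ne.symm hj]
  · simp

/-- If `h` is the unique continuous map homotopic to the identity
semiconjugating `f` to the toral automorphism `g` induced by `A`, and `f'`, `A'`
commute with `f`, `A` respectively (with `f'` homotopic to the automorphism induced
by `A'`), then `h` also semiconjugates `f'` to the automorphism induced by `A'`. -/
theorem stmt1 (k : ℕ) (A A' : Matrix (Fin (k+1)) (Fin (k+1)) ℤ)
    (hA : IsUnit A.det) (hA' : IsUnit A'.det) (hAA' : A * A' = A' * A)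
    (f f' : Torus (k+1) → Torus (k+1)) (hf : Continuous f) (hf' : Continuous f')
    (hff' : f ∘ f' = f' ∘ f)
    (hfg : ContinuousMap.Homotopic ⟨f, hf⟩ ⟨toralMap A, toralMap_continuous A⟩)
    (hf'g' : ContinuousMap.Homotopic ⟨f', hf'⟩ ⟨toralMap A', toralMap_continuous A'⟩)
    (h : Torus (k+1) → Torus (k+1)) (hh : Continuous h)
    (hhid : ContinuousMap.Homotopic ⟨h, hh⟩ (ContinuousMap.id _))
    (hsemi : h ∘ f = toralMap A ∘ h)
    (huniq : ∀ (h' : Torus (k+1) → Torus (k+1)) (hh' : Continuous h'),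
      ContinuousMap.Homotopic ⟨h', hh'⟩ (ContinuousMap.id _) →
      h' ∘ f = toralMap A ∘ h' → h' = h) :
    h ∘ f' = toralMap A' ∘ h := by
  have h1 : A'⁻¹ * A' = 1 := Matrix.nonsing_inv_mul _ hA'
  have h2 : A' * A'⁻¹ = 1 := Matrix.mul_nonsing_inv _ hA'
  have h3 : A'⁻¹ * A = A * A'⁻¹ := by
    calc A'⁻¹ * A = A'⁻¹ * A * (A' * A'⁻¹) := by rw [h2, mul_one]
      _ = A'⁻¹ * (A * A') * A'⁻¹ := by simp only [mul_assoc]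
      _ = (A'⁻¹ * A') * A * A'⁻¹ := by rw [hAA']; simp only [mul_assoc]
      _ = A * A'⁻¹ := by rw [h1, one_mul]
  have hc := toralMap_continuous A'⁻¹
  have key : toralMap A'⁻¹ ∘ h ∘ f' = h := by
    refine huniq _ (hc.comp (hh.comp hf')) ?_ ?_
    · have H := (ContinuousMap.Homotopic.refl
        (⟨toralMap A'⁻¹, hc⟩ : C(Torus (k+1), Torus (k+1)))).comp (hhid.comp hf'g')
      have e : (⟨toralMap A'⁻¹, hc⟩ : C(Torus (k+1), Torus (k+1))).comp
          ((ContinuousMap.id _).comp ⟨toralMap A', toralMap_continuous A'⟩)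
          = ContinuousMap.id _ := by
        refine ContinuousMap.ext fun x => ?_
        change toralMap A'⁻¹ (toralMap A' x) = x
        rw [← toralMap_mul_apply, h1, toralMap_one_apply]
      rw [e] at H
      exact H
    · funext x
      have a : f (f' x) = f' (f x) := congrFun hff' x
      have b : h (f (f' x)) = toralMap A (h (f' x)) := congrFun hsemi (f' x)
      change toralMap A'⁻¹ (h (f' (f x))) = toralMap A (toralMap A'⁻¹ (h (f' x)))
      rw [← a, b, ← toralMap_mul_apply, ← toralMap_mul_apply, h3]
  funext x
  have a : toralMap A'⁻¹ (h (f' x)) = h x := congrFun key x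
  change h (f' x) = toralMap A' (h x)
  rw [← a, ← toralMap_mul_apply, h2, toralMap_one_apply]
end
end

section
/- Let k ≥ 1 and let χ_1, …, χ_{k+1} be linear functionals on ℝ^k such that χ_1 + ⋯ + χ_{k+1} = 0 and any k of them are linearly independent. Then for each i ∈ {1, …, k+1} the open cone C_i = { t ∈ ℝ^k : χ_i(t) > 0 and χ_j(t) < 0 for all j ≠ i } is nonempty, and there exist t_i ∈ C_i, i = 1, …, k+1, with t_1 + ⋯ + t_{k+1} = 0. -/
open Filter Function Set

/-- If `χ_1, …, χ_{k+1}` are linear functionals on `ℝ^k` with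
`χ_1 + ⋯ + χ_{k+1} = 0` and any `k` of them linearly independent, then each cone
`C_i = {t : χ_i(t) > 0, χ_j(t) < 0 for j ≠ i}` is nonempty, and one can pick
`t_i ∈ C_i` with `t_1 + ⋯ + t_{k+1} = 0`. -/
theorem stmt12 (k : ℕ) (hk : 1 ≤ k)
    (χ : Fin (k+1) → ((Fin k → ℝ) →ₗ[ℝ] ℝ))
    (hsum : ∑ i, χ i = 0)
    (hindep : ∀ i : Fin (k+1),
      LinearIndependent ℝ (fun j : {j : Fin (k+1) // j ≠ i} => χ (j : Fin (k+1)))) :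
    (∀ i : Fin (k+1), ∃ t : Fin k → ℝ,
      0 < χ i t ∧ ∀ j : Fin (k+1), j ≠ i → χ j t < 0) ∧
    ∃ t : Fin (k+1) → (Fin k → ℝ),
      (∀ i, 0 < χ i (t i) ∧ ∀ j : Fin (k+1), j ≠ i → χ j (t i) < 0) ∧
      ∑ i, t i = 0 := by
  have hcard : ∀ i : Fin (k+1), Fintype.card {j : Fin (k+1) // j ≠ i} = k := by
    intro i
    simp [Fintype.card_subtype_compl]
  have hinj : ∀ i : Fin (k+1), ∀ t : Fin k → ℝ, (∀ j, j ≠ i → χ j t = 0) → t = 0 := by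
    intro i t ht
    have hspan := (hindep i).span_eq_top_of_card_eq_finrank' (by
      rw [hcard i]
      exact ((Subspace.dual_finrank_eq (K := ℝ) (V := Fin k → ℝ)).trans (by simp)).symm)
    rw [← Module.forall_dual_apply_eq_zero_iff ℝ]
    intro f
    have hf : f ∈ Submodule.span ℝ
        (Set.range (fun j : {j : Fin (k+1) // j ≠ i} => χ (j : Fin (k+1)))) := by
      rw [hspan]; trivial
    induction hf using Submodule.span_induction with
    | mem x hx =>
      obtain ⟨j, rfl⟩ := hx
      exact ht j j.2
    | zero => simp
    | add x y _ _ hx hy => simp [hx, hy]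
    | smul a x _ hx => simp [hx]
  have hval : ∀ t, ∑ j, χ j t = 0 := by
    intro t
    have := congrArg (fun f => f t) hsum
    simpa using this
  have hex : ∀ i : Fin (k+1), ∃ t : Fin k → ℝ, ∀ j, j ≠ i → χ j t = -1 := by
    intro i
    let T : (Fin k → ℝ) →ₗ[ℝ] ({j : Fin (k+1) // j ≠ i} → ℝ) :=
      LinearMap.pi (fun j => χ j)
    have hT : Function.Injective T := by
      rw [injective_iff_map_eq_zero]
      intro t ht
      exact hinj i t (fun j hj => congrFun ht ⟨j, hj⟩)
    have hs : Function.Surjective T :=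
      (LinearMap.injective_iff_surjective_of_finrank_eq_finrank (by
        rw [Module.finrank_fintype_fun_eq_card, Module.finrank_fintype_fun_eq_card, hcard i]
        simp)).1 hT
    obtain ⟨t, ht⟩ := hs (fun _ => -1)
    exact ⟨t, fun j hj => congrFun ht ⟨j, hj⟩⟩
  choose t ht using hex
  have hk' : (0:ℝ) < k := by exact_mod_cast hk
  have hti : ∀ i, χ i (t i) = k := by
    intro i
    have h := hval (t i)
    rw [← Finset.add_sum_erase _ _ (Finset.mem_univ i),
      Finset.sum_congr rfl (fun j hj => ht i j (Finset.ne_of_mem_erase hj))] at h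
    simp at h
    linarith
  have hmain : ∀ i, 0 < χ i (t i) ∧ ∀ j : Fin (k+1), j ≠ i → χ j (t i) < 0 := by
    intro i
    refine ⟨by rw [hti]; exact hk', fun j hj => ?_⟩
    rw [ht i j hj]; norm_num
  refine ⟨fun i => ⟨t i, hmain i⟩, t, hmain, ?_⟩
  apply hinj 0
  intro j _
  rw [map_sum, ← Finset.add_sum_erase _ _ (Finset.mem_univ j),
    Finset.sum_congr rfl (fun i hi => ht i j (Finset.ne_of_mem_erase hi).symm), hti]
  simp
end

section
/- Let μ be a nonzero Radon measure on ℝ (a Borel measure finite on compact sets). Let G be the set of invertible affine maps g(x) = ax + b (a ≠ 0) of ℝ for which there exists a constant c > 0 with g_*μ = c·μ. Then G is a subgroup of the group of invertible affine transformations of ℝ, and G is closed: if g_n(x) = a_n x + b_n belong to G, a_n → a with a ≠ 0, and b_n → b, then the map g(x) = ax + b belongs to G. -/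
open MeasureTheory Filter Function Set
open scoped NNReal ENNReal

/-- The set of (parameters `(a,b)` of) invertible affine maps `x ↦ a x + b` of `ℝ`
which preserve the measure `μ` up to a positive scalar multiple. -/
def affScaleGroup (μ : Measure ℝ) : Set (ℝ × ℝ) :=
  {p : ℝ × ℝ | p.1 ≠ 0 ∧ ∃ c : ℝ≥0, 0 < c ∧
    Measure.map (fun x => p.1 * x + p.2) μ = (c : ℝ≥0∞) • μ}

theorem aff_tendsto (μ : Measure ℝ) [IsFiniteMeasureOnCompacts μ] (a b : ℝ) (s : ℕ → ℝ × ℝ)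
    (ha : Tendsto (fun n => (s n).1) atTop (nhds a)) (ha0 : a ≠ 0)
    (hb : Tendsto (fun n => (s n).2) atTop (nhds b)) (f : CompactlySupportedContinuousMap ℝ ℝ) :
    Tendsto (fun n => ∫ x, f ((s n).1 * x + (s n).2) ∂μ) atTop
      (nhds (∫ x, f (a * x + b) ∂μ)) := by
  have hf : Continuous f := f.continuous
  obtain ⟨M, hM⟩ := hf.bounded_above_of_compact_support f.hasCompactSupport
  obtain ⟨R, hR⟩ := f.hasCompactSupport.isBounded.exists_norm_le
  have hapos : 0 < |a| := abs_pos.mpr ha0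
  set K := Metric.closedBall (0 : ℝ) ((R + |b| + 1) * 2 / |a|) with hK
  refine tendsto_integral_filter_of_dominated_convergence (K.indicator fun _ => M) ?_ ?_ ?_ ?_
  · exact Eventually.of_forall fun n => (by fun_prop : Continuous _).aestronglyMeasurable
  · have h1 : ∀ᶠ n in atTop, |a| / 2 < |(s n).1| :=
      ha.abs.eventually_const_lt (by linarith)
    have h2 : ∀ᶠ n in atTop, |(s n).2| < |b| + 1 :=
      hb.abs.eventually_lt_const (by linarith)
    filter_upwards [h1, h2] with n hn1 hn2
    refine Eventually.of_forall fun x => ?_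
    by_cases hx : x ∈ K
    · simpa [hx] using hM _
    · have : f ((s n).1 * x + (s n).2) = 0 := by
        by_contra hne
        have h3 := hR _ (subset_tsupport _ hne)
        apply hx
        rw [hK, mem_closedBall_zero_iff, le_div_iff₀ hapos]
        rw [Real.norm_eq_abs] at h3 ⊢
        have h4 : |(s n).1 * x| ≤ R + |b| + 1 := by
          have := abs_sub ((s n).1 * x + (s n).2) ((s n).2)
          rw [add_sub_cancel_right] at this
          linarith
        rw [abs_mul] at h4
        nlinarith [abs_nonneg x]
      simp [hx, this]
  · rw [integrable_indicator_iff Metric.isClosed_closedBall.measurableSet]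
    exact integrableOn_const (isCompact_closedBall _ _).measure_lt_top.ne
  · refine Eventually.of_forall fun x => ?_
    exact (hf.tendsto _).comp ((ha.mul_const x).add hb)

/-- For a nonzero Radon measure `μ` on `ℝ`, the collection `G`
of invertible affine maps `g(x) = a x + b` with `g_*μ = c·μ` for some `c > 0` is
a subgroup of the affine group of `ℝ` (contains the identity, and is closed
under composition and inversion), and is closed under limits of its elements. -/
theorem stmt13 (μ : Measure ℝ) [IsFiniteMeasureOnCompacts μ] (hμ : μ ≠ 0) :
    ((1, 0) ∈ affScaleGroup μ ∧
     (∀ p q : ℝ × ℝ, p ∈ affScaleGroup μ → q ∈ affScaleGroup μ →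
       (p.1 * q.1, p.1 * q.2 + p.2) ∈ affScaleGroup μ) ∧
     (∀ p : ℝ × ℝ, p ∈ affScaleGroup μ → (p.1⁻¹, -(p.2 / p.1)) ∈ affScaleGroup μ)) ∧
    (∀ (a b : ℝ) (s : ℕ → ℝ × ℝ), (∀ n, s n ∈ affScaleGroup μ) →
      Tendsto (fun n => (s n).1) atTop (nhds a) → a ≠ 0 →
      Tendsto (fun n => (s n).2) atTop (nhds b) →
      (a, b) ∈ affScaleGroup μ) := by
  refine ⟨⟨?_, ?_, ?_⟩, ?_⟩
  · exact ⟨one_ne_zero, 1, one_pos, by simp⟩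
  · rintro ⟨a, b⟩ ⟨a', b'⟩ ⟨ha, c, hc, h⟩ ⟨ha', c', hc', h'⟩
    refine ⟨mul_ne_zero ha ha', c' * c, mul_pos hc' hc, ?_⟩
    dsimp only at *
    have : (fun x => a * a' * x + (a * b' + b)) =
        (fun x => a * x + b) ∘ (fun x => a' * x + b') := by
      funext x; simp only [comp]; ring
    rw [this, ← Measure.map_map (by fun_prop) (by fun_prop), h', Measure.map_smul, h, smul_smul,
      ENNReal.coe_mul]
  · rintro ⟨a, b⟩ ⟨ha, c, hc, h⟩
    refine ⟨inv_ne_zero ha, c⁻¹, inv_pos.mpr hc, ?_⟩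
    dsimp only at *
    have h2 : Measure.map (fun x => a⁻¹ * x + -(b / a)) (Measure.map (fun x => a * x + b) μ) = μ := by
      rw [Measure.map_map (by fun_prop) (by fun_prop)]
      have : (fun x => a⁻¹ * x + -(b / a)) ∘ (fun x => a * x + b) = id := by
        funext x; simp only [comp, id]; field_simp; ring
      rw [this, Measure.map_id]
    rw [h, Measure.map_smul] at h2
    conv_rhs => rw [← h2]
    rw [smul_smul, ← ENNReal.coe_mul, inv_mul_cancel₀ hc.ne', ENNReal.coe_one, one_smul]
  · intro a b s hs ha ha0 hb
    choose hs0 c hc hmap using hs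
    have key : ∀ (f : CompactlySupportedContinuousMap ℝ ℝ) n,
        ∫ x, f ((s n).1 * x + (s n).2) ∂μ = c n * ∫ x, f x ∂μ := by
      intro f n
      have hf : Continuous f := f.continuous
      have := congrArg (fun ν => ∫ x, f x ∂ν) (hmap n)
      rw [integral_map (by fun_prop) hf.aestronglyMeasurable, integral_smul_measure] at this
      simpa using this
    obtain ⟨f, hf⟩ : ∃ f : CompactlySupportedContinuousMap ℝ ℝ, ∫ x, f x ∂μ ≠ 0 := by
      by_contra! hcon
      exact hμ (Measure.ext_of_integral_eq_on_compactlySupported (fun f => by simp [hcon f]))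
    have hlim : ∃ L : ℝ, Tendsto (fun n => (c n : ℝ)) atTop (nhds L) := by
      refine ⟨(∫ x, f (a * x + b) ∂μ) / ∫ x, f x ∂μ, ?_⟩
      refine ((aff_tendsto μ a b s ha ha0 hb f).div_const (∫ x, f x ∂μ)).congr fun n => ?_
      rw [key, mul_div_cancel_right₀ _ hf]
    obtain ⟨L, hL⟩ := hlim
    have hL0 : 0 ≤ L := ge_of_tendsto' hL fun n => (c n).2
    lift L to ℝ≥0 using hL0
    let e : ℝ ≃ₜ ℝ := (Homeomorph.mulLeft₀ a ha0).trans (Homeomorph.addRight b)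
    have he : (e : ℝ → ℝ) = fun x => a * x + b := rfl
    have hfin : IsFiniteMeasureOnCompacts (Measure.map (fun x => a * x + b) μ) := by
      constructor
      intro K hK
      rw [← he, Measure.map_apply e.continuous.measurable hK.measurableSet]
      exact (e.isCompact_preimage.mpr hK).measure_lt_top
    have hfin2 : IsFiniteMeasureOnCompacts ((L : ℝ≥0∞) • μ) :=
      IsFiniteMeasureOnCompacts.smul μ ENNReal.coe_ne_top
    have hE : Measure.map (fun x => a * x + b) μ = (L : ℝ≥0∞) • μ := by
      refine Measure.ext_of_integral_eq_on_compactlySupported fun f => ?_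
      have hf : Continuous f := f.continuous
      rw [integral_map (by fun_prop) hf.aestronglyMeasurable, integral_smul_measure]
      refine tendsto_nhds_unique (aff_tendsto μ a b s ha ha0 hb f) ?_
      simp only [key]
      simpa using hL.mul_const (∫ x, f x ∂μ)
    refine ⟨ha0, L, ?_, hE⟩
    rw [pos_iff_ne_zero]
    rintro rfl
    rw [ENNReal.coe_zero, zero_smul, Measure.map_eq_zero_iff (by fun_prop)] at hE
    exact hμ hE
end
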